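/- arXiv:2204.08789 — 2 statements merged into one kernel-verified Lean document; each statement's English description precedes it below -/
import Mathlib

section
/- Fix $d > 0$ and for each integer $n \ge d$ let $M_n$ be a random variable with binomial distribution with $n(n-1)/2$ trials and success probability $d/n$, and let $\mu_n$ denote the law of $2M_n/n$. Define $\psi : \mathbb{R} \to [0,\infty]$ by $\psi(x) = \tfrac{1}{2}\big(x \log(x/d) - x + d\big)$ for $x > 0$, $\psi(0) = d/2$, and $\psi(x) = +\infty$ for $x < 0$. Then $\psi$ is a good rate function and $(\mu_n)$ satisfies a large deviation principle with speed $n$ and rate function $\psi$: for every closed set $F \subseteq \mathbb{R}$, $\limsup_{n\to\infty} \tfrac{1}{n} \log \mathbb{P}(2M_n/n \in F) \le -\inf_{x \in F} \psi(x)$, and for every open set $O \subseteq \mathbb{R}$, $\liminf_{n\to\infty} \tfrac{1}{n} \log \mathbb{P}(2M_n/n \in O) \ge -\inf_{x \in O} \psi(x)$. -/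
open MeasureTheory Filter
open scoped ENNReal

/-- The rate function `ψ(x) = (x log(x/d) - x + d)/2` for `x > 0`, `ψ(0) = d/2`,
`ψ(x) = ∞` for `x < 0`. -/
noncomputable def binomialRate (d : ℝ) (x : ℝ) : ℝ≥0∞ :=
  if x < 0 then ⊤
  else if x = 0 then ENNReal.ofReal (d / 2)
  else ENNReal.ofReal ((x * Real.log (x / d) - x + d) / 2)

noncomputable def rateReal (d x : ℝ) : ℝ := (x * Real.log (x / d) - x + d) / 2

lemma binomialRate_eq {d x : ℝ} (hx : 0 ≤ x) :
    binomialRate d x = ENNReal.ofReal (rateReal d x) := by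
  unfold binomialRate rateReal
  rw [if_neg (not_lt.2 hx)]
  split_ifs with h
  · simp [h]
  · rfl

lemma rateReal_kl {d : ℝ} (hd : 0 < d) (x : ℝ) :
    rateReal d x = d / 2 * InformationTheory.klFun (x / d) := by
  unfold rateReal
  rw [InformationTheory.klFun_apply]
  field_simp
  ring

lemma rateReal_nonneg {d x : ℝ} (hd : 0 < d) (hx : 0 ≤ x) : 0 ≤ rateReal d x := by
  rw [rateReal_kl hd]
  have := InformationTheory.klFun_nonneg (div_nonneg hx hd.le)
  positivity

lemma rateReal_cont {d : ℝ} (hd : 0 < d) : Continuous (rateReal d) := by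
  have : rateReal d = fun x => d / 2 * InformationTheory.klFun (x / d) := funext (rateReal_kl hd)
  rw [this]
  exact continuous_const.mul (InformationTheory.continuous_klFun.comp (continuous_id.div_const d))

lemma rate_coe {d x : ℝ} (hd : 0 < d) (hx : 0 ≤ x) :
    (binomialRate d x : EReal) = ((rateReal d x : ℝ) : EReal) := by
  rw [binomialRate_eq hx, EReal.coe_ennreal_ofReal, max_eq_left (rateReal_nonneg hd hx)]

lemma rate_compact {d : ℝ} (hd : 0 < d) (c : ℝ≥0∞) (hc : c ≠ ⊤) :
    IsCompact {x : ℝ | binomialRate d x ≤ c} := by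
  have h : {x : ℝ | binomialRate d x ≤ c} = Set.Ici 0 ∩ {x | rateReal d x ≤ c.toReal} := by
    ext x
    simp only [Set.mem_ofPred_eq, Set.mem_inter_iff, Set.mem_Ici]
    rcases lt_or_ge x 0 with hx | hx
    · simp [binomialRate, hx, hc, not_le.2 hx]
    · rw [binomialRate_eq hx, ENNReal.ofReal_le_iff_le_toReal hc]
      simp [hx]
  rw [h]
  refine IsCompact.of_isClosed_subset (isCompact_Icc (a := 0) (b := 2 * c.toReal + d * Real.exp 1))
    (isClosed_Ici.inter (isClosed_le (rateReal_cont hd) continuous_const)) ?_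
  rintro x ⟨hx0, hx⟩
  refine ⟨hx0, ?_⟩
  simp only [Set.mem_ofPred_eq, Set.mem_Ici] at hx hx0
  rcases hx0.eq_or_lt with h0 | h0
  · rw [← h0]; positivity
  have hl := Real.one_sub_inv_le_log_of_pos (x := x / d / Real.exp 1) (by positivity)
  rw [Real.log_div (by positivity) (by positivity), Real.log_exp] at hl
  have h2 := mul_le_mul_of_nonneg_left hl h0.le
  have h3 : x * (1 - (x / d / Real.exp 1)⁻¹) = x - d * Real.exp 1 := by
    field_simp
  unfold rateReal at hx
  rw [h3] at h2
  linarith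

lemma cast_N (n : ℕ) : ((n * (n - 1) / 2 : ℕ) : ℝ) = (n : ℝ) * (n - 1) / 2 := by
  rw [← Nat.choose_two_right, Nat.cast_choose_two]

lemma pmf_upper {d : ℝ} (hd : 0 < d) {n : ℕ} (hn : d ≤ n) (k : ℕ) :
    ((n * (n - 1) / 2).choose k : ℝ) * (d / n) ^ k * (1 - d / n) ^ (n * (n - 1) / 2 - k)
      ≤ Real.exp (d / 2 - n * rateReal d (2 * k / n)) := by
  have hn0 : (0 : ℝ) < n := hd.trans_le hn
  have hp : d / n ≤ 1 := (div_le_one hn0).2 hn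
  have hp0 : 0 < d / n := by positivity
  have hN := cast_N n
  set N := n * (n - 1) / 2 with hNdef
  set p := d / n with hpdef
  set y : ℝ := 2 * k / n / d with hy
  have hy0 : 0 ≤ y := by positivity
  rcases lt_or_ge N k with hk | hk
  · rw [Nat.choose_eq_zero_of_lt hk]; simp; positivity
  have h1 : (N.choose k : ℝ) * p ^ k * (1 - p) ^ (N - k) * y ^ k ≤ (p * y + (1 - p)) ^ N := by
    rw [add_pow]
    refine le_trans (le_of_eq ?_) (Finset.single_le_sum (f := fun m => (p * y) ^ m * (1 - p) ^ (N - m) * (N.choose m : ℝ)) (fun i _ => ?_) (Finset.mem_range.2 (Nat.lt_succ_of_le hk)))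
    · simp only [mul_pow]; ring
    · have : 0 ≤ 1 - p := by linarith
      positivity
  have h2 : (p * y + (1 - p)) ^ N ≤ Real.exp (N * (p * (y - 1))) := by
    rw [Real.exp_nat_mul]
    refine pow_le_pow_left₀ (by nlinarith [mul_nonneg hp0.le hy0]) ?_ N
    have := Real.add_one_le_exp (p * (y - 1))
    linarith
  have hexp : (N : ℝ) * (p * (y - 1)) ≤ d / 2 - n * rateReal d (2 * k / n) + k * Real.log y := by
    have : (N : ℝ) * (p * (y - 1)) = d / 2 - n * rateReal d (2 * k / n) + k * Real.log y - k / n := by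
      rw [hN, hpdef]
      unfold rateReal
      rw [← hy]
      have hk' : (2 * k / n : ℝ) = d * y := by rw [hy]; field_simp
      have hk2 : (k : ℝ) = d * y * n / 2 := by rw [hy]; field_simp
      rw [hk', hk2]
      field_simp
      ring
    have : (0 : ℝ) ≤ k / n := by positivity
    linarith
  have h3 := h1.trans (h2.trans (Real.exp_le_exp.2 hexp))
  rw [Real.exp_add] at h3
  rcases Nat.eq_zero_or_pos k with h0 | h0
  · subst h0
    simpa using h3
  · have hyp : 0 < y := by rw [hy]; positivity
    rw [Real.exp_nat_mul, Real.exp_log hyp] at h3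
    exact le_of_mul_le_mul_right h3 (by positivity)

lemma log_factorial_le (k : ℕ) (hk : 1 ≤ k) :
    Real.log (k.factorial : ℝ) ≤ k * Real.log k - k + Real.log k + 1 := by
  induction k, hk using Nat.le_induction with
  | base => simp
  | succ k hk ih =>
    have hk0 : (0 : ℝ) < k := by exact_mod_cast hk
    rw [Nat.factorial_succ]
    push_cast
    rw [Real.log_mul (by positivity) (by positivity)]
    have h := Real.one_sub_inv_le_log_of_pos (x := ((k : ℝ) + 1) / k) (by positivity)
    rw [Real.log_div (by positivity) (by positivity)] at h
    have h2 := mul_le_mul_of_nonneg_left h (by positivity : (0 : ℝ) ≤ k + 1)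
    have h3 : ((k : ℝ) + 1) * (1 - (((k : ℝ) + 1) / k)⁻¹) = 1 := by field_simp; ring
    rw [h3] at h2
    linarith

lemma pmf_lower {d : ℝ} (hd : 0 < d) {n : ℕ} (hn : d < n) (N k : ℕ) (hk1 : 1 ≤ k) (hk : k ≤ N) :
    Real.exp (k * Real.log (N + 1 - k) - (k * Real.log k - k + Real.log k + 1)
      + k * Real.log (d / n) + N * Real.log (1 - d / n)) ≤
    (N.choose k : ℝ) * (d / n) ^ k * (1 - d / n) ^ (N - k) := by
  have hn0 : (0 : ℝ) < n := hd.trans hn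
  have hp : d / n < 1 := (div_lt_one hn0).2 hn
  have hp0 : 0 < d / n := by positivity
  have hq : 0 < 1 - d / n := by linarith
  have hc : (0 : ℝ) < N.choose k := by exact_mod_cast Nat.choose_pos hk
  rw [← Real.le_log_iff_exp_le (by positivity), Real.log_mul (by positivity) (by positivity),
    Real.log_mul (by positivity) (by positivity), Real.log_pow, Real.log_pow]
  have hkN : (k : ℝ) ≤ N := by exact_mod_cast hk
  have h1 : ((N : ℝ) + 1 - k) ^ k ≤ k.factorial * N.choose k := by
    have := Nat.pow_sub_le_descFactorial N k
    rw [Nat.descFactorial_eq_factorial_mul_choose] at this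
    have h := (Nat.cast_le (α := ℝ)).2 this
    push_cast [Nat.cast_sub (show k ≤ N + 1 by omega)] at h
    exact h
  have h2 := Real.log_le_log (pow_pos (by linarith) k) h1
  rw [Real.log_pow, Real.log_mul (by positivity) (by positivity)] at h2
  have h3 := log_factorial_le k hk1
  have h4 : (N : ℝ) * Real.log (1 - d / n) ≤ ((N - k : ℕ) : ℝ) * Real.log (1 - d / n) := by
    apply mul_le_mul_of_nonpos_right
    · exact_mod_cast Nat.sub_le N k
    · exact Real.log_nonpos hq.le (by linarith)
  linarith

lemma tendsto_Nlog (d : ℝ) : Tendsto (fun n : ℕ =>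
    (((n * (n - 1) / 2 : ℕ) : ℝ) * Real.log (1 - d / n)) / n) atTop (nhds (-d / 2)) := by
  have h1 := (Real.tendsto_mul_log_one_add_div_atTop (-d)).comp (tendsto_natCast_atTop_atTop (R := ℝ))
  have h2 : Tendsto (fun n : ℕ => ((1 : ℝ) - 1 / n) / 2) atTop (nhds ((1 - 0) / 2)) :=
    (tendsto_const_nhds.sub tendsto_one_div_atTop_nhds_zero_nat).div_const 2
  have h3 := h2.mul h1
  rw [show (1 - 0) / 2 * (-d) = -d / 2 by ring] at h3
  refine h3.congr' ?_
  filter_upwards [eventually_gt_atTop 0] with n hn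
  have : (0 : ℝ) < n := by exact_mod_cast hn
  rw [cast_N]
  simp only [Function.comp]
  rw [show 1 + -d / (n : ℝ) = 1 - d / n by ring]
  field_simp

lemma tendsto_lower {d x : ℝ} (hd : 0 < d) (hx : 0 < x) (k : ℕ → ℕ)
    (hk : Tendsto (fun n : ℕ => (k n : ℝ) / n) atTop (nhds (x / 2)))
    (hkt : Tendsto k atTop atTop) : Tendsto (fun n : ℕ =>
    (k n * Real.log (((n * (n - 1) / 2 : ℕ) : ℝ) + 1 - k n)
      - (k n * Real.log (k n) - k n + Real.log (k n) + 1)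
      + k n * Real.log (d / n) + ((n * (n - 1) / 2 : ℕ) : ℝ) * Real.log (1 - d / n)) / n)
      atTop (nhds (-rateReal d x)) := by
  have hinv : Tendsto (fun n : ℕ => (1 : ℝ) / n) atTop (nhds 0) :=
    tendsto_one_div_atTop_nhds_zero_nat
  have hA : Tendsto (fun n : ℕ => ((1 : ℝ) - 1 / n) / 2 + (1 / n) * (1 / n) - (k n : ℝ) / n * (1 / n))
      atTop (nhds ((1 - 0) / 2 + 0 * 0 - x / 2 * 0)) :=
    (((tendsto_const_nhds.sub hinv).div_const 2).add (hinv.mul hinv)).sub (hk.mul hinv)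
  have hB : Tendsto (fun n : ℕ => (((1 : ℝ) - 1 / n) / 2 + (1 / n) * (1 / n) - (k n : ℝ) / n * (1 / n)) * d / ((k n : ℝ) / n))
      atTop (nhds (((1 - 0) / 2 + 0 * 0 - x / 2 * 0) * d / (x / 2))) :=
    (hA.mul_const d).div hk (by positivity)
  have hv : ((1 - 0) / 2 + 0 * 0 - x / 2 * 0) * d / (x / 2) = d / x := by field_simp; ring
  rw [hv] at hB
  have hC := hB.log (by positivity)
  have hlog : Tendsto (fun n : ℕ => Real.log (k n) / k n) atTop (nhds 0) := by
    have := Real.isLittleO_log_id_atTop.tendsto_div_nhds_zero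
    exact (this.comp (tendsto_natCast_atTop_atTop (R := ℝ))).comp hkt
  have hD := ((((hk.mul hC).add hk).sub (hlog.mul hk)).sub hinv).add (tendsto_Nlog d)
  have hval : x / 2 * Real.log (d / x) + x / 2 - 0 * (x / 2) - 0 + -d / 2 = -rateReal d x := by
    unfold rateReal
    rw [show d / x = (x / d)⁻¹ by rw [inv_div], Real.log_inv]
    ring
  rw [hval] at hD
  refine hD.congr' ?_
  filter_upwards [eventually_gt_atTop 0, hkt.eventually_ge_atTop 1,
    hA.eventually_const_lt (u := 0) (by norm_num)] with n hn hk1 hpos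
  have hn0 : (0 : ℝ) < n := by exact_mod_cast hn
  have hk0 : (0 : ℝ) < k n := by exact_mod_cast hk1
  have e1 : ((n * (n - 1) / 2 : ℕ) : ℝ) + 1 - k n =
      n ^ 2 * (((1 : ℝ) - 1 / n) / 2 + (1 / n) * (1 / n) - (k n : ℝ) / n * (1 / n)) := by
    rw [cast_N]; field_simp
  rw [e1]
  set A := ((1 : ℝ) - 1 / n) / 2 + (1 / n) * (1 / n) - (k n : ℝ) / n * (1 / n)
  rw [Real.log_mul (by positivity) hpos.ne', Real.log_pow,
    Real.log_div (by positivity) (by positivity), Real.log_mul hpos.ne' (by positivity),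
    Real.log_div (by positivity) (by positivity), Real.log_div hd.ne' (by positivity)]
  field_simp
  push_cast
  ring

lemma limsup_helper (P : ℕ → ℝ≥0∞) (b : ℕ → ℝ) (l : ℝ) (hb : Tendsto (fun n => b n / n) atTop (nhds l))
    (h : ∀ᶠ n in atTop, P n ≤ ENNReal.ofReal (Real.exp (b n))) :
    Filter.atTop.limsup (fun n : ℕ => (((n : ℝ)⁻¹ : ℝ) : EReal) * ENNReal.log (P n)) ≤ (l : EReal) := by
  have ht : Tendsto (fun n => ((b n / n : ℝ) : EReal)) atTop (nhds (l : EReal)) :=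
    (continuous_coe_real_ereal.tendsto l).comp hb
  rw [← ht.limsup_eq]
  refine Filter.limsup_le_limsup ?_
  filter_upwards [h] with n hn
  have := ENNReal.log_le_log hn
  rw [ENNReal.log_ofReal_of_pos (Real.exp_pos _), Real.log_exp] at this
  refine (mul_le_mul_of_nonneg_left this (by exact_mod_cast (by positivity : (0 : ℝ) ≤ (n : ℝ)⁻¹))).trans ?_
  rw [← EReal.coe_mul, div_eq_inv_mul]

lemma liminf_helper (P : ℕ → ℝ≥0∞) (b : ℕ → ℝ) (l : ℝ) (hb : Tendsto (fun n => b n / n) atTop (nhds l))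
    (h : ∀ᶠ n in atTop, ENNReal.ofReal (Real.exp (b n)) ≤ P n) :
    (l : EReal) ≤ Filter.atTop.liminf (fun n : ℕ => (((n : ℝ)⁻¹ : ℝ) : EReal) * ENNReal.log (P n)) := by
  have ht : Tendsto (fun n => ((b n / n : ℝ) : EReal)) atTop (nhds (l : EReal)) :=
    (continuous_coe_real_ereal.tendsto l).comp hb
  rw [← ht.liminf_eq]
  refine Filter.liminf_le_liminf ?_
  filter_upwards [h] with n hn
  have := ENNReal.log_le_log hn
  rw [ENNReal.log_ofReal_of_pos (Real.exp_pos _), Real.log_exp] at this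
  refine le_trans ?_ (mul_le_mul_of_nonneg_left this (by exact_mod_cast (by positivity : (0 : ℝ) ≤ (n : ℝ)⁻¹)))
  rw [← EReal.coe_mul, div_eq_inv_mul]

lemma tendsto_upper (d c : ℝ) : Tendsto (fun n : ℕ =>
    (2 * Real.log n + (d / 2 - n * c)) / n) atTop (nhds (-c)) := by
  have h1 : Tendsto (fun n : ℕ => Real.log n / n) atTop (nhds 0) :=
    (Real.isLittleO_log_id_atTop.tendsto_div_nhds_zero).comp (tendsto_natCast_atTop_atTop (R := ℝ))
  have hinv : Tendsto (fun n : ℕ => (1 : ℝ) / n) atTop (nhds 0) :=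
    tendsto_one_div_atTop_nhds_zero_nat
  have h := ((h1.const_mul 2).add (hinv.const_mul (d / 2))).sub_const c
  rw [show (2 : ℝ) * 0 + d / 2 * 0 - c = -c by ring] at h
  refine h.congr' ?_
  filter_upwards [eventually_gt_atTop 0] with n hn
  have hn0 : (0 : ℝ) < n := by exact_mod_cast hn
  field_simp
  ring

theorem ldp_binomial_edge_count (d : ℝ) (hd : 0 < d)
    (ν : ℕ → Measure ℕ) (hprob : ∀ n, IsProbabilityMeasure (ν n))
    (hν : ∀ n : ℕ, d ≤ (n : ℝ) → ∀ k : ℕ,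
      ν n {k} = ENNReal.ofReal (((n * (n - 1) / 2).choose k : ℝ) * (d / n) ^ k
        * (1 - d / n) ^ (n * (n - 1) / 2 - k))) :
    (∀ c : ℝ≥0∞, c ≠ ⊤ → IsCompact {x : ℝ | binomialRate d x ≤ c}) ∧
    (∀ F : Set ℝ, IsClosed F →
      Filter.atTop.limsup (fun n : ℕ =>
          (((n : ℝ)⁻¹ : ℝ) : EReal)
            * ENNReal.log (Measure.map (fun k : ℕ => 2 * (k : ℝ) / n) (ν n) F))
        ≤ -(⨅ x ∈ F, (binomialRate d x : EReal))) ∧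
    (∀ O : Set ℝ, IsOpen O →
      -(⨅ x ∈ O, (binomialRate d x : EReal)) ≤
        Filter.atTop.liminf (fun n : ℕ =>
          (((n : ℝ)⁻¹ : ℝ) : EReal)
            * ENNReal.log (Measure.map (fun k : ℕ => 2 * (k : ℝ) / n) (ν n) O))) := by
  classical
  refine ⟨fun c hc => rate_compact hd c hc, ?_, ?_⟩
  · intro F hF
    rw [EReal.le_neg, ← EReal.ge_of_forall_gt_iff_ge]
    intro c hc
    rw [EReal.le_neg, ← EReal.coe_neg]
    refine limsup_helper _ (fun n => 2 * Real.log n + (d / 2 - n * c)) (-c) (tendsto_upper d c) ?_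
    filter_upwards [eventually_gt_atTop 1, (tendsto_natCast_atTop_atTop (R := ℝ)).eventually_ge_atTop d]
      with n hn1 hn
    have hn0 : (0 : ℝ) < n := by exact_mod_cast (by omega : 0 < n)
    rw [Measure.map_apply (measurable_of_countable _) hF.measurableSet,
      ← Measure.tsum_indicator_apply_singleton _ _ (MeasurableSet.of_discrete)]
    rw [tsum_eq_sum (s := Finset.range (n * (n - 1) / 2 + 1))]
    · refine (Finset.sum_le_card_nsmul _ _ (ENNReal.ofReal (Real.exp (d / 2 - n * c))) ?_).trans ?_
      · intro k _
        rw [Set.indicator_apply]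
        split_ifs with hk
        · rw [hν n hn k]
          apply ENNReal.ofReal_le_ofReal
          refine (pmf_upper hd hn k).trans (Real.exp_le_exp.2 ?_)
          have h1 : (c : EReal) < (binomialRate d (2 * k / n) : EReal) :=
            hc.trans_le (iInf₂_le (2 * (k : ℝ) / n) hk)
          rw [rate_coe hd (by positivity), EReal.coe_lt_coe_iff] at h1
          have := mul_le_mul_of_nonneg_left h1.le hn0.le
          linarith
        · exact zero_le
      · rw [Finset.card_range, nsmul_eq_mul, Real.exp_add, ENNReal.ofReal_mul (Real.exp_pos _).le]
        gcongr
        rw [show 2 * Real.log (n : ℝ) = Real.log n * 2 by ring, Real.exp_mul, Real.exp_log hn0, ← ENNReal.ofReal_natCast]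
        apply ENNReal.ofReal_le_ofReal
        push_cast
        rw [cast_N]
        have : (2 : ℝ) ≤ n := by exact_mod_cast hn1
        norm_num
        nlinarith
    · intro k hk
      have hk' : n * (n - 1) / 2 < k := by
        simp only [Finset.mem_range, not_lt] at hk; omega
      rw [Set.indicator_apply]
      split_ifs
      · rw [hν n hn k, Nat.choose_eq_zero_of_lt hk']; simp
      · rfl
  · intro O hO
    rw [EReal.neg_le]
    refine le_iInf₂ fun x hx => ?_
    rcases lt_or_ge x 0 with hx0 | hx0
    · simp [binomialRate, hx0]
    rw [EReal.neg_le, rate_coe hd hx0, ← EReal.coe_neg]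
    have hle : ∀ n k : ℕ, 2 * (k : ℝ) / n ∈ O →
        ν n {k} ≤ Measure.map (fun k : ℕ => 2 * (k : ℝ) / n) (ν n) O := by
      intro n k hk
      rw [Measure.map_apply (measurable_of_countable _) hO.measurableSet]
      exact measure_mono (by simpa using hk)
    rcases hx0.eq_or_lt with h0 | h0
    · subst h0
      refine liminf_helper _ (fun n : ℕ => ((n * (n - 1) / 2 : ℕ) : ℝ) * Real.log (1 - d / n)) _ ?_ ?_
      · have := tendsto_Nlog d
        convert this using 2
        simp [rateReal]; ring
      · filter_upwards [(tendsto_natCast_atTop_atTop (R := ℝ)).eventually_gt_atTop d] with n hn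
        refine le_trans ?_ (hle n 0 (by simpa using hx))
        have hn0 : (0 : ℝ) < n := hd.trans hn
        have hp : d / n < 1 := (div_lt_one hn0).2 hn
        rw [hν n hn.le 0, Real.exp_nat_mul, Real.exp_log (by linarith)]
        simp
    · set k : ℕ → ℕ := fun n => ⌊x / 2 * n⌋₊ with hkdef
      have hk : Tendsto (fun n : ℕ => (k n : ℝ) / n) atTop (nhds (x / 2)) :=
        (tendsto_nat_floor_mul_div_atTop (R := ℝ) (a := x / 2) (by positivity)).comp
          tendsto_natCast_atTop_atTop
      have hkt : Tendsto k atTop atTop :=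
        tendsto_nat_floor_atTop.comp
          ((tendsto_natCast_atTop_atTop (R := ℝ)).const_mul_atTop (by positivity))
      refine liminf_helper _ _ _ (tendsto_lower hd h0 k hk hkt) ?_
      have hk2 : Tendsto (fun n : ℕ => 2 * (k n : ℝ) / n) atTop (nhds x) := by
        have := hk.const_mul 2
        rw [show 2 * (x / 2) = x by ring] at this
        exact this.congr fun n => by ring
      filter_upwards [(tendsto_natCast_atTop_atTop (R := ℝ)).eventually_gt_atTop d,
        (tendsto_natCast_atTop_atTop (R := ℝ)).eventually_ge_atTop (x + 1),
        hkt.eventually_ge_atTop 1, hk2.eventually (hO.mem_nhds hx)] with n hn hnx hk1 hmem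
      refine le_trans ?_ (hle n (k n) hmem)
      rw [hν n hn.le]
      apply ENNReal.ofReal_le_ofReal
      refine pmf_lower hd hn _ _ hk1 ?_
      have h1 : (k n : ℝ) ≤ x / 2 * n := Nat.floor_le (by positivity)
      have h2 : (k n : ℝ) ≤ ((n * (n - 1) / 2 : ℕ) : ℝ) := by
        rw [cast_N]
        nlinarith
      exact_mod_cast h2
end

section
/- Let $\delta : [0,1] \to [0,\infty)$ be a continuous monotone increasing function with $\delta(0) = 0$, let $\varepsilon > 0$, and let $h$ be a positive integer. Then there exists a constant $C = C(\delta,\varepsilon,h) > 0$ such that for every $n$ and every simple graph $H$ on vertex set $\{1,\dots,n\}$ satisfying $\sum_{v \in U} \deg_H(v) \le n\, \delta(|U|/n)$ for every subset $U \subseteq \{1,\dots,n\}$, the number of vertices $v$ whose $h$-ball $B_H(v,h) = \{u : u \text{ is connected to } v \text{ in } H \text{ and } \mathrm{dist}_H(v,u) \le h\}$ has cardinality $|B_H(v,h)| > C$ is at most $\varepsilon n$. -/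
open Classical in
noncomputable def fvBall {n : ℕ} (G : SimpleGraph (Fin n)) (h : ℕ) (v : Fin n) : Finset (Fin n) :=
  Finset.univ.filter (fun u => G.Reachable v u ∧ G.dist v u ≤ h)

open Classical in
theorem fvBall_succ {n : ℕ} (G : SimpleGraph (Fin n)) (h : ℕ) (v : Fin n) :
    fvBall G (h+1) v ⊆ {v} ∪ (G.neighborFinset v).biUnion (fvBall G h) := by
  intro u hu
  simp only [fvBall, Finset.mem_filter, Finset.mem_univ, true_and] at hu
  obtain ⟨hr, hd⟩ := hu
  obtain ⟨p, hp⟩ := hr.exists_walk_length_eq_dist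
  cases p with
  | nil => simp
  | @cons _ w _ hadj q =>
    simp only [SimpleGraph.Walk.length_cons] at hp
    have := SimpleGraph.dist_le q
    refine Finset.mem_union_right _ (Finset.mem_biUnion.2 ⟨w, by simpa using hadj, ?_⟩)
    simp only [fvBall, Finset.mem_filter, Finset.mem_univ, true_and]
    exact ⟨⟨q⟩, by omega⟩

open Classical in
theorem fv_main (δ : ℝ → ℝ)
    (hδc : ContinuousOn δ (Set.Icc 0 1))
    (hδm : MonotoneOn δ (Set.Icc 0 1))
    (hδ0 : δ 0 = 0)
    (hδnn : ∀ x ∈ Set.Icc (0 : ℝ) 1, 0 ≤ δ x) (h : ℕ) :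
    ∀ ε : ℝ, 0 < ε → ∃ C : ℝ, 0 < C ∧ ∀ (n : ℕ) (G : SimpleGraph (Fin n)),
      (∀ U : Finset (Fin n), (∑ v ∈ U, (G.degree v : ℝ)) ≤ n * δ (U.card / n)) →
      ((Finset.univ.filter (fun v => C < ((fvBall G h v).card : ℝ))).card : ℝ) ≤ ε * n := by
  induction h with
  | zero =>
    intro ε hε
    refine ⟨1, one_pos, fun n G _ => ?_⟩
    rw [Finset.filter_false_of_mem]
    · simp; positivity
    · intro v _
      have : fvBall G 0 v ⊆ {v} := by
        intro u hu
        simp only [fvBall, Finset.mem_filter, Finset.mem_univ, true_and] at hu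
        have := (hu.1.dist_eq_zero_iff).1 (by omega)
        simp [this]
      have := Finset.card_le_card this
      simp only [Finset.card_singleton] at this
      rw [not_lt]; exact_mod_cast this
  | succ h ih =>
    intro ε hε
    obtain ⟨r, hr, hrδ⟩ := Metric.continuousWithinAt_iff.1 (hδc 0 (by simp)) (ε/2) (by positivity)
    obtain ⟨C, hC, ihC⟩ := ih (r/2) (by positivity)
    have h1 : 0 ≤ δ 1 := hδnn 1 (by simp)
    set D : ℝ := 2 * (δ 1 + 1) / ε with hD
    have hDpos : 0 < D := by positivity
    have hDε : ε / 2 * D = δ 1 + 1 := by rw [hD]; field_simp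
    refine ⟨1 + D * C, by positivity, fun n G hG => ?_⟩
    rcases Nat.eq_zero_or_pos n with rfl | hn
    · simp [Finset.univ_eq_empty]
    have hn' : (0 : ℝ) < n := by exact_mod_cast hn
    have hI : ∀ U : Finset (Fin n), (U.card / n : ℝ) ∈ Set.Icc (0:ℝ) 1 := by
      intro U
      refine ⟨by positivity, ?_⟩
      rw [div_le_one hn']
      exact_mod_cast (Finset.card_le_univ U).trans (by simp)
    set S := Finset.univ.filter (fun v => C < ((fvBall G h v).card : ℝ)) with hS
    set A := Finset.univ.filter (fun v => D < (G.degree v : ℝ)) with hA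
    have hScard : (S.card : ℝ) ≤ r / 2 * n := ihC n G hG
    have hAb : (A.card : ℝ) ≤ ε / 2 * n := by
      have e1 : (A.card : ℝ) * D ≤ ∑ v ∈ A, (G.degree v : ℝ) := by
        rw [← nsmul_eq_mul]
        exact Finset.card_nsmul_le_sum _ _ _ (fun v hv => (Finset.mem_filter.1 hv).2.le)
      have e2 := hG A
      have e3 : δ (A.card / n) ≤ δ 1 := hδm (hI A) (by simp) (hI A).2
      have e4 : (A.card : ℝ) * D ≤ (ε / 2 * n) * D := by
        have : (n:ℝ) * δ (A.card / n) ≤ n * δ 1 := by gcongr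
        have e5 : (ε / 2 * n) * D = n * (δ 1 + 1) := by rw [← hDε]; ring
        rw [e5]; linarith
      exact le_of_mul_le_mul_right e4 hDpos
    have hTb : ((S.biUnion fun w => G.neighborFinset w).card : ℝ) ≤ ε / 2 * n := by
      have e1 : ((S.biUnion fun w => G.neighborFinset w).card : ℝ) ≤ ∑ v ∈ S, (G.degree v : ℝ) := by
        exact_mod_cast Finset.card_biUnion_le
      have e2 := hG S
      have e3 : (S.card / n : ℝ) ≤ r / 2 := by rwa [div_le_iff₀ hn']
      have e4 := hrδ (hI S) (by
        rw [Real.dist_eq, sub_zero, abs_of_nonneg (hI S).1]; linarith)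
      rw [hδ0, Real.dist_eq, sub_zero] at e4
      have e5 := (le_abs_self _).trans e4.le
      have : (n:ℝ) * δ (S.card / n) ≤ n * (ε / 2) := by gcongr
      linarith
    have hsub : Finset.univ.filter (fun v => 1 + D * C < ((fvBall G (h+1) v).card : ℝ)) ⊆
        A ∪ S.biUnion fun w => G.neighborFinset w := by
      intro v hv
      by_contra hcon
      simp only [Finset.mem_union, not_or] at hcon
      obtain ⟨hvA, hvT⟩ := hcon
      have hd : (G.degree v : ℝ) ≤ D := by simpa [hA] using hvA
      have hw : ∀ w ∈ G.neighborFinset v, ((fvBall G h w).card : ℝ) ≤ C := by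
        intro w hw
        by_contra hlt
        apply hvT
        refine Finset.mem_biUnion.2 ⟨w, ?_, ?_⟩
        · simpa [hS] using hlt
        · simpa using ((G.mem_neighborFinset v w).1 hw).symm
      have hv' := (Finset.mem_filter.1 hv).2
      have e1 : ((fvBall G (h+1) v).card : ℝ) ≤
          1 + ∑ w ∈ G.neighborFinset v, ((fvBall G h w).card : ℝ) := by
        have := (Finset.card_le_card (fvBall_succ G h v)).trans (Finset.card_union_le _ _)
        have h2 : ((G.neighborFinset v).biUnion (fvBall G h)).card ≤ _ := Finset.card_biUnion_le
        rw [Finset.card_singleton] at this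
        exact_mod_cast this.trans (Nat.add_le_add_left h2 1)
      have e2 := Finset.sum_le_card_nsmul _ _ _ hw
      rw [nsmul_eq_mul, SimpleGraph.card_neighborFinset_eq_degree] at e2
      have : (G.degree v : ℝ) * C ≤ D * C := by gcongr
      linarith
    have hfin : ((Finset.univ.filter
        (fun v => 1 + D * C < ((fvBall G (h+1) v).card : ℝ))).card : ℝ) ≤
        A.card + (S.biUnion fun w => G.neighborFinset w).card := by
      exact_mod_cast (Finset.card_le_card hsub).trans (Finset.card_union_le _ _)
    linarith

/-- If a graph `H` on `n` vertices satisfies `∑_{v ∈ U} deg_H(v) ≤ n δ(|U|/n)` for all vertex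
subsets `U`, where `δ : [0,1] → [0,∞)` is continuous, monotone increasing, with `δ(0) = 0`,
then for every `ε > 0` and positive integer `h` there is `C > 0` (depending only on
`δ, ε, h`) such that at most `ε n` vertices have `h`-ball of cardinality greater than `C`. -/
theorem few_vertices_with_large_balls
    (δ : ℝ → ℝ)
    (hδc : ContinuousOn δ (Set.Icc 0 1))
    (hδm : MonotoneOn δ (Set.Icc 0 1))
    (hδ0 : δ 0 = 0)
    (hδnn : ∀ x ∈ Set.Icc (0 : ℝ) 1, 0 ≤ δ x)
    (ε : ℝ) (hε : 0 < ε) (h : ℕ) (hh : 0 < h) :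
    ∃ C : ℝ, 0 < C ∧ ∀ (n : ℕ) (G : SimpleGraph (Fin n)),
      (∀ U : Finset (Fin n),
        (∑ v ∈ U, (Nat.card (G.neighborSet v) : ℝ)) ≤ n * δ (U.card / n)) →
      (Nat.card {v : Fin n |
          C < (Nat.card {u : Fin n | G.Reachable v u ∧ G.dist v u ≤ h} : ℝ)} : ℝ)
        ≤ ε * n := by
  classical
  obtain ⟨C, hC, H⟩ := fv_main δ hδc hδm hδ0 hδnn h ε hε
  refine ⟨C, hC, fun n G hG => ?_⟩
  have key := H n G (by
    intro U
    have := hG U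
    simpa only [Nat.card_eq_fintype_card, SimpleGraph.card_neighborSet_eq_degree] using this)
  have hb : ∀ v, Nat.card {u : Fin n | G.Reachable v u ∧ G.dist v u ≤ h} = (fvBall G h v).card := by
    intro v
    rw [Nat.card_coe_set_eq, ← Set.ncard_coe_finset]
    congr 1
    ext u
    simp [fvBall]
  simp only [hb]
  rw [Nat.card_coe_set_eq]
  convert key using 2
  rw [← Set.ncard_coe_finset]
  congr 1
  ext u
  simp
end
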